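/- Let s = [i, j] be a proper segment, p ∈ ℙ_s an MY path for s, and s' = [m, n] ∈ c_p^− with s' ≠ *s = [j, i + h]. Then: (i) if m < j, there exists n' with m < n' < n such that [m, n'] ∈ c_p^+; (ii) if n < h + i, there exists m' with n − h < m' < m such that [m', n] ∈ c_p^+. In either case the produced segment s'' ∈ c_p^+ satisfies spar(s'') = spar(s') − |supp(s'') − supp(s')|. -/

import Mathlib

/-!
Let `s' = [m, n]` be the segment of a local maximum of `p` at `k`. The endpoint `m` is constant
along ascending stretches of `p`, and `n` along descending ones. Follow the ascent into `k`
backwards: as `2m < 2j = p 0`, it does not begin at `0`, so it begins at a local minimum, whose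
segment is `[m, n']`. The statement for the other endpoint is the same one for the path read from
right to left. Finally, shortening a segment on the right, or lengthening it on the left, by `d`
lowers `spar` by `d` and changes `supp` by `d`.
-/

namespace SnakePaper

/-- `zle a b` : `b - a` is a nonnegative integer (the integrality order `a ≤ b`). -/
def zle (a b : ℚ) : Prop := ∃ n : ℤ, 0 ≤ n ∧ b - a = (n : ℚ)

/-- `zlt a b` : `b - a` is a positive integer (the integrality order `a < b`). -/
def zlt (a b : ℚ) : Prop := ∃ n : ℤ, 0 < n ∧ b - a = (n : ℚ)

/-- `s = (i, j)` is an `N`-segment: `2i ∈ ℤ`, `j - i ∈ ℤ` and `0 ≤ j - i ≤ N + 1`. -/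
def IsSeg (N : ℕ) (s : ℚ × ℚ) : Prop :=
  (∃ m : ℤ, 2 * s.1 = (m : ℚ)) ∧
  ∃ n : ℤ, s.2 - s.1 = (n : ℚ) ∧ 0 ≤ n ∧ (n : ℚ) ≤ (N : ℚ) + 1

/-- `s = (i, j)` is a proper `N`-segment: `2i ∈ ℤ`, `j - i ∈ ℤ` and `0 < j - i < N + 1`. -/
def IsProperSeg (N : ℕ) (s : ℚ × ℚ) : Prop :=
  (∃ m : ℤ, 2 * s.1 = (m : ℚ)) ∧
  ∃ n : ℤ, s.2 - s.1 = (n : ℚ) ∧ 0 < n ∧ (n : ℚ) < (N : ℚ) + 1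

/-- `supp [i,j] = j - i`. -/
def supp (s : ℚ × ℚ) : ℚ := s.2 - s.1

/-- `spar [i,j] = i + j`. -/
def spar (s : ℚ × ℚ) : ℚ := s.1 + s.2

/-- Right dual `s* = [j - h, i]`, where `h = N + 1`. -/
def dual (N : ℕ) (s : ℚ × ℚ) : ℚ × ℚ := (s.2 - ((N : ℚ) + 1), s.1)

/-- Left dual `*s = [j, i + h]`, where `h = N + 1`. -/
def ldual (N : ℕ) (s : ℚ × ℚ) : ℚ × ℚ := (s.2, s.1 + ((N : ℚ) + 1))

/-- `1 + s = [i + 1, j + 1]`. -/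
def shift (s : ℚ × ℚ) : ℚ × ℚ := (s.1 + 1, s.2 + 1)

/-- `Covers N s₂ s₁` : `s₂ ▷ s₁`, i.e. `i₁ < i₂ ≤ j₁ < j₂ ≤ h + i₁` (integrality order). -/
def Covers (N : ℕ) (s₂ s₁ : ℚ × ℚ) : Prop :=
  zlt s₁.1 s₂.1 ∧ zle s₂.1 s₁.2 ∧ zlt s₁.2 s₂.2 ∧ zle s₂.2 (((N : ℚ) + 1) + s₁.1)

/-- For `s₂ ▷ s₁`, the intersection `s₁ ∩ s₂ = [i₂, j₁]`. -/
def seginter (s₁ s₂ : ℚ × ℚ) : ℚ × ℚ := (s₂.1, s₁.2)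

/-- For `s₂ ▷ s₁`, the union `s₁ ∪ s₂ = [i₁, j₂]`. -/
def segunion (s₁ s₂ : ℚ × ℚ) : ℚ × ℚ := (s₁.1, s₂.2)

/-- `(s 0, …, s (l-1))` is a ladder of length `l`. -/
def IsLadder (N l : ℕ) (s : ℕ → ℚ × ℚ) : Prop :=
  (∀ k, k < l → IsSeg N (s k)) ∧
  ∀ k m, k < m → m < l → zlt (s k).1 (s m).1 ∧ zlt (s k).2 (s m).2

/-- `(s₁, s₂)` is a ladder of length 2. -/
def IsLadder2 (N : ℕ) (s₁ s₂ : ℚ × ℚ) : Prop :=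
  IsSeg N s₁ ∧ IsSeg N s₂ ∧ zlt s₁.1 s₂.1 ∧ zlt s₁.2 s₂.2

/-- Componentwise covering of two length-`l` tuples: `𝐬 ▷ 𝐬'`. -/
def CoversMulti (N l : ℕ) (s s' : ℕ → ℚ × ℚ) : Prop :=
  ∀ m, m < l → Covers N (s m) (s' m)

/-- `𝐬 ▷_p 𝐬'` for length-`l` tuples: `𝐬(0, l−k) ▷ 𝐬'(k, l)` for all `0 ≤ k ≤ p`. -/
def CoversP (N l p : ℕ) (s s' : ℕ → ℚ × ℚ) : Prop :=
  ∀ k, k ≤ p → ∀ m, m + k < l → Covers N (s m) (s' (m + k))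

/-- `p` is an MY path for the segment `s` (`h = N + 1`; only values on `{0, …, h}` matter). -/
def IsMYPath (N : ℕ) (s : ℚ × ℚ) (p : ℕ → ℤ) : Prop :=
  (∀ k, k < N + 1 → p (k + 1) = p k + 1 ∨ p (k + 1) = p k - 1) ∧
  (p 0 : ℚ) = 2 * s.2 ∧ (p (N + 1) : ℚ) = ((N : ℚ) + 1) + 2 * s.1

/-- `s_{p,k} = [(p(k) - k)/2, (p(k) + k)/2]`. -/
def pathSeg (p : ℕ → ℤ) (k : ℕ) : ℚ × ℚ :=
  (((p k : ℚ) - (k : ℚ)) / 2, ((p k : ℚ) + (k : ℚ)) / 2)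

/-- `c_p^-` : segments at the local maxima of `p` in `[1, N]`. -/
def cMinus (N : ℕ) (p : ℕ → ℤ) : Set (ℚ × ℚ) :=
  {t | ∃ k, 1 ≤ k ∧ k ≤ N ∧ t = pathSeg p k ∧ p (k - 1) = p k - 1 ∧ p (k + 1) = p k - 1}

/-- `c_p^+` : segments at the local minima of `p` in `[1, N]`. -/
def cPlus (N : ℕ) (p : ℕ → ℤ) : Set (ℚ × ℚ) :=
  {t | ∃ k, 1 ≤ k ∧ k ≤ N ∧ t = pathSeg p k ∧ p (k - 1) = p k + 1 ∧ p (k + 1) = p k + 1}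

/-- `c_s^- = ⋃_{p ∈ ℙ_s} c_p^-`. -/
def cSegMinus (N : ℕ) (s : ℚ × ℚ) : Set (ℚ × ℚ) :=
  {t | ∃ p, IsMYPath N s p ∧ t ∈ cMinus N p}

/-- `c_s^+ = ⋃_{p ∈ ℙ_s} c_p^+`. -/
def cSegPlus (N : ℕ) (s : ℚ × ℚ) : Set (ℚ × ℚ) :=
  {t | ∃ p, IsMYPath N s p ∧ t ∈ cPlus N p}

/-- `(p 0, …, p (l-1)) ∈ ℙ_𝐬` for the length-`l` tuple `𝐬`. -/
def IsPathTuple (N l : ℕ) (s : ℕ → ℚ × ℚ) (p : ℕ → ℕ → ℤ) : Prop :=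
  (∀ m, m < l → IsMYPath N (s m) (p m)) ∧
  ∀ m n, m < n → n < l → ∀ k, k ≤ N + 1 → p m k < p n k

/-- The highest path `p_s(k) = spar(s) + |k - supp(s)|` (rational-valued formula). -/
def highestPath (s : ℚ × ℚ) (k : ℚ) : ℚ := spar s + |k - supp s|

/-- The lowest path `p_s^*(k) = spar(s) + h - |k - (h - supp(s))|` (rational-valued formula). -/
def lowestPath (N : ℕ) (s : ℚ × ℚ) (k : ℚ) : ℚ :=
  spar s + ((N : ℚ) + 1) - |k - (((N : ℚ) + 1) - supp s)|

/-- `Small N s₁' t` : `spar(t) ≤ spar(*s₁') - |supp(t) - supp(*s₁')|` (integrality order). -/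
def Small (N : ℕ) (s₁' t : ℚ × ℚ) : Prop :=
  zle (spar t) (spar (ldual N s₁') - |supp t - supp (ldual N s₁')|)

/-- `(s₁, s₂)` and `(s₁', s₂')` are ladders and `(s₁, s₂) ▷₁ (s₁', s₂')`. -/
def Pair1Cover (N : ℕ) (s₁ s₁' s₂ s₂' : ℚ × ℚ) : Prop :=
  IsLadder2 N s₁ s₂ ∧ IsLadder2 N s₁' s₂' ∧
  Covers N s₁ s₁' ∧ Covers N s₂ s₂' ∧ Covers N s₁ s₂'

/-- Lattice paths: `p` moves by `1` or `-1` in each of its first `h` steps. The values of `p` beyond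
`h` are irrelevant. -/
def HasUnitSteps (h : ℕ) (p : ℕ → ℤ) : Prop :=
  ∀ k < h, p (k + 1) = p k + 1 ∨ p (k + 1) = p k - 1

/-- The local minima of a lattice path, as in `cPlus`. As `0 - 1 = 0` in `ℕ`, the index `0` is never
a valley. -/
def IsValley (p : ℕ → ℤ) (k : ℕ) : Prop :=
  p (k - 1) = p k + 1 ∧ p (k + 1) = p k + 1

section Valleys

variable {h k : ℕ} {p : ℕ → ℤ}

theorem IsValley.pos (hk : IsValley p k) : 0 < k := by
  rcases Nat.eq_zero_or_pos k with rfl | hpos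
  · have : p 0 = p 0 + 1 := hk.1
    omega
  · exact hpos

theorem HasUnitSteps.reverse (hp : HasUnitSteps h p) : HasUnitSteps h fun i ↦ p (h - i) := by
  intro i hi
  have hstep := hp (h - (i + 1)) (by omega)
  rw [show h - (i + 1) + 1 = h - i by omega] at hstep
  change p (h - (i + 1)) = p (h - i) + 1 ∨ p (h - (i + 1)) = p (h - i) - 1
  omega

theorem IsValley.of_reverse (hk : IsValley (fun i ↦ p (h - i)) k) (hkh : k < h) :
    IsValley p (h - k) := by
  have hpos := hk.pos
  obtain ⟨hleft, hright⟩ := hk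
  beta_reduce at hleft
  rw [show h - (k - 1) = h - k + 1 by omega] at hleft
  exact ⟨hright, hleft⟩

theorem HasUnitSteps.exists_isValley_lt (hp : HasUnitSteps h p) (hk : k ≤ h)
    (hup : p (k - 1) = p k - 1) (hlt : p k - k < p 0) :
    ∃ l < k, IsValley p l ∧ p l - l = p k - k := by
  induction k with
  | zero => simp at hlt
  | succ k ih =>
    have hup' : p k = p (k + 1) - 1 := hup
    have hdiag : p (k + 1) - (k + 1 : ℕ) = p k - k := by push_cast; omega
    rw [hdiag] at hlt ⊢
    cases k with
    | zero => simp at hlt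
    | succ k =>
      rcases hp k (by omega) with hstep | hstep
      · obtain ⟨l, hl, hvalley, heq⟩ := ih (by omega) (eq_sub_of_add_eq hstep.symm) hlt
        exact ⟨l, hl.trans (Nat.lt_succ_self _), hvalley, heq⟩
      · exact ⟨k + 1, Nat.lt_succ_self _, ⟨eq_add_of_sub_eq hstep.symm, by omega⟩, rfl⟩

theorem HasUnitSteps.exists_isValley_gt (hp : HasUnitSteps h p) (hk : k < h)
    (hdown : p (k + 1) = p k - 1) (hlt : p k + k < p h + h) :
    ∃ l, k < l ∧ l < h ∧ IsValley p l ∧ p l + l = p k + k := by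
  have hkk : h - (h - k) = k := Nat.sub_sub_self hk.le
  obtain ⟨l, hlk, hvalley, heq⟩ := hp.reverse.exists_isValley_lt (Nat.sub_le h k)
    (by rw [hkk, show h - (h - k - 1) = k + 1 by omega, hdown])
    (by rw [hkk, Nat.sub_zero]; omega)
  have hpos := hvalley.pos
  rw [hkk] at heq
  exact ⟨h - l, by omega, by omega, hvalley.of_reverse (by omega), by omega⟩

end Valleys

section Segments

theorem zlt.lt {a b : ℚ} (h : zlt a b) : a < b := by
  obtain ⟨d, hd, heq⟩ := h
  exact sub_pos.mp (heq ▸ Int.cast_pos.mpr hd)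

theorem zlt_of_sub_eq_natCast_sub {a b : ℚ} {k l : ℕ} (hkl : k < l) (h : b - a = l - k) :
    zlt a b :=
  ⟨l - k, by omega, by rw [h]; push_cast; rfl⟩

theorem spar_eq_sub_abs_of_snd_le {m n n' : ℚ} (h : n' ≤ n) :
    spar (m, n') = spar (m, n) - |supp (m, n') - supp (m, n)| := by
  simp only [spar, supp, sub_sub_sub_cancel_right]
  rw [abs_of_nonpos (sub_nonpos.mpr h)]
  ring

theorem spar_eq_sub_abs_of_fst_le {m m' n : ℚ} (h : m' ≤ m) :
    spar (m', n) = spar (m, n) - |supp (m', n) - supp (m, n)| := by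
  simp only [spar, supp, sub_sub_sub_cancel_left]
  rw [abs_of_nonneg (sub_nonneg.mpr h)]
  ring

end Segments

section PathSegments

variable {N k l : ℕ} {p : ℕ → ℤ} {s : ℚ × ℚ}

theorem two_mul_pathSeg_fst (p : ℕ → ℤ) (k : ℕ) : 2 * (pathSeg p k).1 = p k - k :=
  mul_div_cancel₀ _ two_ne_zero

theorem two_mul_pathSeg_snd (p : ℕ → ℤ) (k : ℕ) : 2 * (pathSeg p k).2 = p k + k :=
  mul_div_cancel₀ _ two_ne_zero

theorem pathSeg_fst_congr (h : p k - k = p l - l) : (pathSeg p k).1 = (pathSeg p l).1 := by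
  have : (p k - k : ℚ) = p l - l := by exact_mod_cast h
  simp only [pathSeg, this]

theorem pathSeg_snd_congr (h : p k + k = p l + l) : (pathSeg p k).2 = (pathSeg p l).2 := by
  have : (p k + k : ℚ) = p l + l := by exact_mod_cast h
  simp only [pathSeg, this]

theorem pathSeg_snd_sub_fst (p : ℕ → ℤ) (k : ℕ) : (pathSeg p k).2 - (pathSeg p k).1 = k := by
  simp only [pathSeg]
  ring

theorem IsValley.pathSeg_mem_cPlus (hk : IsValley p k) (hkN : k ≤ N) : pathSeg p k ∈ cPlus N p :=
  ⟨k, hk.pos, hkN, rfl, hk⟩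

theorem exists_mem_cPlus_fst_eq (hp : HasUnitSteps (N + 1) p) (hs : s ∈ cMinus N p)
    (hlt : 2 * s.1 < p 0) :
    ∃ n', zlt s.1 n' ∧ zlt n' s.2 ∧ (s.1, n') ∈ cPlus N p := by
  obtain ⟨k, -, hkN, rfl, hup, -⟩ := hs
  rw [two_mul_pathSeg_fst] at hlt
  obtain ⟨l, hlk, hvalley, heq⟩ :=
    hp.exists_isValley_lt (by omega) hup (by exact_mod_cast hlt)
  have hk := pathSeg_snd_sub_fst p k
  have hl := pathSeg_snd_sub_fst p l
  rw [← pathSeg_fst_congr heq] at hk ⊢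
  exact ⟨(pathSeg p l).2,
    zlt_of_sub_eq_natCast_sub hvalley.pos (by push_cast; linarith),
    zlt_of_sub_eq_natCast_sub hlk (by linarith),
    hvalley.pathSeg_mem_cPlus (by omega)⟩

theorem exists_mem_cPlus_snd_eq (hp : HasUnitSteps (N + 1) p) (hs : s ∈ cMinus N p)
    (hlt : 2 * s.2 < p (N + 1) + (N + 1)) :
    ∃ m', zlt (s.2 - (N + 1)) m' ∧ zlt m' s.1 ∧ (m', s.2) ∈ cPlus N p := by
  obtain ⟨k, -, hkN, rfl, -, hdown⟩ := hs
  rw [two_mul_pathSeg_snd] at hlt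
  obtain ⟨l, hkl, hlN, hvalley, heq⟩ :=
    hp.exists_isValley_gt (by omega) hdown (by exact_mod_cast hlt)
  have hk := pathSeg_snd_sub_fst p k
  have hl := pathSeg_snd_sub_fst p l
  rw [← pathSeg_snd_congr heq] at hk ⊢
  exact ⟨(pathSeg p l).1,
    zlt_of_sub_eq_natCast_sub hlN (by push_cast; linarith),
    zlt_of_sub_eq_natCast_sub hkl (by linarith),
    hvalley.pathSeg_mem_cPlus (by omega)⟩

end PathSegments

/-- Let `s = [i,j]` be a proper segment, `p ∈ ℙ_s`, and `s' = [m,n] ∈ c_p^-` with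
`s' ≠ *s`. If `m < j` there is `m < n' < n` with `[m, n'] ∈ c_p^+`; if `n < h + i`
there is `n − h < m' < m` with `[m', n] ∈ c_p^+`; in either case the produced
segment `s''` satisfies `spar(s'') = spar(s') − |supp(s'') − supp(s')|`. -/
theorem lowtoup (N : ℕ) (hN : 1 ≤ N) (s : ℚ × ℚ) (hs : IsProperSeg N s)
    (p : ℕ → ℤ) (hp : IsMYPath N s p) (s' : ℚ × ℚ)
    (hs' : s' ∈ cMinus N p) (hne : s' ≠ ldual N s) :
    (zlt s'.1 s.2 →
      ∃ n' : ℚ, zlt s'.1 n' ∧ zlt n' s'.2 ∧ (s'.1, n') ∈ cPlus N p ∧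
        spar (s'.1, n') = spar s' - |supp (s'.1, n') - supp s'|) ∧
    (zlt s'.2 (((N : ℚ) + 1) + s.1) →
      ∃ m' : ℚ, zlt (s'.2 - ((N : ℚ) + 1)) m' ∧ zlt m' s'.1 ∧ (m', s'.2) ∈ cPlus N p ∧
        spar (m', s'.2) = spar s' - |supp (m', s'.2) - supp s'|) := by
  obtain ⟨hstep, hstart, hend⟩ := hp
  constructor
  · intro hm
    obtain ⟨n', hmn, hnn, hmem⟩ := exists_mem_cPlus_fst_eq hstep hs' (by linarith [hm.lt])
    exact ⟨n', hmn, hnn, hmem, spar_eq_sub_abs_of_snd_le hnn.lt.le⟩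
  · intro hn
    obtain ⟨m', hnm, hmm, hmem⟩ := exists_mem_cPlus_snd_eq hstep hs' (by linarith [hn.lt])
    exact ⟨m', hnm, hmm, hmem, spar_eq_sub_abs_of_fst_le hmm.lt.le⟩

end SnakePaper
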